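/- arXiv:2602.12061 — 3 statements merged into one kernel-verified Lean document; each statement's English description precedes it below -/
import Mathlib

section
/- Let δ > 0 and w_c > 0. Then the iterated integral ∫₀^δ ∫₀^{2π} ∫_z^δ ∫₀^{arccos(z/r)} w_c·r²·sin(φ) dφ dr dθ dz equals π·w_c·δ⁴/4. Consequently, requiring this quantity to equal the energy release rate G₀ > 0 yields w_c = 4·G₀/(π·δ⁴). -/
open Real MeasureTheory

/-!
The points bonded across the fracture plane to a point at distance `z` from it form a spherical cap
of height `δ - z` in the ball of radius `δ`. In spherical coordinates about that point, the
maximal polar angle of the cap at radius `r` is `arccos (z / r)`, so the three inner integrals are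
`w_c` times the cap volume `π (δ - z)² (2δ + z) / 3`; integrating over `z` gives `π w_c δ⁴ / 4`.
-/

lemma integral_sin_zero_arccos {x : ℝ} (hx : |x| ≤ 1) :
    ∫ φ in (0:ℝ)..arccos x, sin φ = 1 - x := by
  rw [integral_sin, cos_zero, cos_arccos (neg_le_of_abs_le hx) (le_of_abs_le hx)]

lemma integral_const_mul_sq_mul_sin_zero_arccos_div (w : ℝ) {z r : ℝ} (hzr : |z| ≤ |r|) :
    ∫ φ in (0:ℝ)..arccos (z / r), w * r ^ 2 * sin φ = w * (r ^ 2 - z * r) := by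
  have hdiv : |z / r| ≤ 1 := by
    rw [abs_div]
    exact div_le_one_of_le₀ hzr (abs_nonneg r)
  rw [intervalIntegral.integral_const_mul, integral_sin_zero_arccos hdiv]
  rcases eq_or_ne r 0 with rfl | hr
  · simp
  · field_simp

lemma mem_uIcc_left_of_mem_uIcc_right {α : Type*} [LinearOrder α] {a b x y : α}
    (hx : x ∈ Set.uIcc a b) (hy : y ∈ Set.uIcc x b) : x ∈ Set.uIcc a y := by
  grind [Set.mem_uIcc]

lemma integral_sq_sub_const_mul_self (z δ : ℝ) :
    ∫ r in z..δ, (r ^ 2 - z * r) = (δ - z) ^ 2 * (2 * δ + z) / 6 := by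
  rw [intervalIntegral.integral_sub (Continuous.intervalIntegrable (by fun_prop) _ _)
    (Continuous.intervalIntegrable (by fun_prop) _ _), intervalIntegral.integral_const_mul,
    integral_pow, integral_id]
  ring

lemma integral_const_sphericalCap (w : ℝ) {δ z : ℝ} (hz : z ∈ Set.uIcc 0 δ) :
    ∫ _θ in (0:ℝ)..(2 * π), ∫ r in z..δ, ∫ φ in (0:ℝ)..arccos (z / r), w * r ^ 2 * sin φ
      = w * (π * (δ - z) ^ 2 * (2 * δ + z) / 3) := by
  have abs_le {r : ℝ} (hr : r ∈ Set.uIcc z δ) : |z| ≤ |r| := by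
    simpa only [sub_zero] using
      Set.abs_sub_left_of_mem_uIcc (mem_uIcc_left_of_mem_uIcc_right hz hr)
  have integral_polar : Set.EqOn (fun r ↦ ∫ φ in (0:ℝ)..arccos (z / r), w * r ^ 2 * sin φ)
      (fun r ↦ w * (r ^ 2 - z * r)) (Set.uIcc z δ) := fun r hr ↦
    integral_const_mul_sq_mul_sin_zero_arccos_div w (abs_le hr)
  rw [intervalIntegral.integral_const, intervalIntegral.integral_congr integral_polar,
    intervalIntegral.integral_const_mul, integral_sq_sub_const_mul_self, smul_eq_mul]
  ring

lemma integral_sphericalCap_volume (δ : ℝ) :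
    ∫ z in (0:ℝ)..δ, π * (δ - z) ^ 2 * (2 * δ + z) / 3 = π * δ ^ 4 / 4 := by
  calc ∫ z in (0:ℝ)..δ, π * (δ - z) ^ 2 * (2 * δ + z) / 3
      = ∫ z in (0:ℝ)..δ, (π * δ * (δ - z) ^ 2 - π / 3 * (δ - z) ^ 3) := by
        congr 1 with z
        ring
    _ = ∫ h in (0:ℝ)..δ, (π * δ * h ^ 2 - π / 3 * h ^ 3) := by
        rw [intervalIntegral.integral_comp_sub_left
          (fun h ↦ π * δ * h ^ 2 - π / 3 * h ^ 3), sub_self, sub_zero]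
    _ = π * δ ^ 4 / 4 := by
        rw [intervalIntegral.integral_sub (Continuous.intervalIntegrable (by fun_prop) _ _)
          (Continuous.intervalIntegrable (by fun_prop) _ _)]
        simp only [intervalIntegral.integral_const_mul, integral_pow]
        ring

lemma integral_integral_const_sphericalCap (w δ : ℝ) :
    ∫ z in (0:ℝ)..δ, ∫ _θ in (0:ℝ)..(2 * π), ∫ r in z..δ,
        ∫ φ in (0:ℝ)..arccos (z / r), w * r ^ 2 * sin φ
      = π * w * δ ^ 4 / 4 := by
  rw [intervalIntegral.integral_congr fun z hz ↦ integral_const_sphericalCap w hz,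
    intervalIntegral.integral_const_mul, integral_sphericalCap_volume]
  ring

/-- 3D energy release rate under the critical energy density criterion: the
iterated integral `∫₀^δ ∫₀^{2π} ∫_z^δ ∫₀^{arccos(z/r)} w_c·r²·sin φ dφ dr dθ dz`
equals `π·w_c·δ⁴/4`; consequently, if this equals `G₀ > 0`, then
`w_c = 4·G₀/(π·δ⁴)`. -/
theorem energy_release_rate_critical_energy_density_3D
    (δ wc : ℝ) (hδ : 0 < δ) (hwc : 0 < wc) :
    (∫ z in (0:ℝ)..δ, ∫ θ in (0:ℝ)..(2 * π), ∫ r in z..δ,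
        ∫ φ in (0:ℝ)..(Real.arccos (z / r)), wc * r ^ 2 * Real.sin φ)
      = π * wc * δ ^ 4 / 4 ∧
    ∀ G₀ : ℝ, 0 < G₀ →
      (∫ z in (0:ℝ)..δ, ∫ θ in (0:ℝ)..(2 * π), ∫ r in z..δ,
          ∫ φ in (0:ℝ)..(Real.arccos (z / r)), wc * r ^ 2 * Real.sin φ) = G₀ →
      wc = 4 * G₀ / (π * δ ^ 4) := by
  have henergy := integral_integral_const_sphericalCap wc δ
  refine ⟨henergy, fun G₀ _ hG₀ ↦ ?_⟩
  rw [eq_div_iff (by positivity), ← hG₀, henergy]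
  ring
end

section
/- Let δ > 0, h > 0, and w_c > 0. Then the iterated integral h·∫₀^δ ∫_z^δ ∫_{-arccos(z/r)}^{arccos(z/r)} w_c·r dθ dr dz equals 2·h·w_c·δ³/3. Consequently, requiring this quantity to equal the energy release rate G₀ > 0 yields w_c = 3·G₀/(2·h·δ³). -/
open Real MeasureTheory

/-!
The innermost integral is `2 w_c r arccos (z / r)`. Exchanging the order of the `z`- and
`r`-integrations on the triangle `0 < z < r ≤ δ` and substituting `z = r t` separates the variables:
the double integral is `2 w_c ∫₀^δ r² dr · ∫₀¹ arccos t dt`, and `∫₀¹ arccos t dt = 1`.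
-/

section

variable {E : Type*} [NormedAddCommGroup E] [NormedSpace ℝ E]

theorem intervalIntegral_integral_swap_triangle {μ ν : Measure ℝ} [SFinite μ] [SFinite ν]
    [NullSingletonClass μ] {f : ℝ → ℝ → E} {a b : ℝ} (hab : a ≤ b)
    (hf : IntegrableOn (Function.uncurry f) {p | a < p.1 ∧ p.1 < p.2 ∧ p.2 ≤ b} (μ.prod ν)) :
    ∫ z in a..b, ∫ r in z..b, f z r ∂ν ∂μ = ∫ r in a..b, ∫ z in a..r, f z r ∂μ ∂ν := by
  set T : Set (ℝ × ℝ) := {p | a < p.1 ∧ p.1 < p.2 ∧ p.2 ≤ b} with hT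
  have measurableSet_T : MeasurableSet T := by measurability
  have integral_first_fixed (z : ℝ) : ∫ r, T.indicator (Function.uncurry f) (z, r) ∂ν =
      (Set.Ioc a b).indicator (fun z ↦ ∫ r in z..b, f z r ∂ν) z := by
    by_cases hz : z ∈ Set.Ioc a b
    · rw [Set.indicator_of_mem hz, intervalIntegral.integral_of_le hz.2,
        ← integral_indicator measurableSet_Ioc]
      congr 1 with r
      simp [Set.indicator_apply, hT, hz.1]
    · rw [Set.indicator_of_notMem hz]
      refine integral_eq_zero_of_ae (.of_forall fun r ↦ Set.indicator_of_notMem ?_ _)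
      exact fun h ↦ hz ⟨h.1, h.2.1.le.trans h.2.2⟩
  have integral_second_fixed (r : ℝ) : ∫ z, T.indicator (Function.uncurry f) (z, r) ∂μ =
      (Set.Ioc a b).indicator (fun r ↦ ∫ z in a..r, f z r ∂μ) r := by
    by_cases hr : r ∈ Set.Ioc a b
    · rw [Set.indicator_of_mem hr, intervalIntegral.integral_of_le hr.1.le,
        integral_Ioc_eq_integral_Ioo, ← integral_indicator measurableSet_Ioo]
      congr 1 with z
      simp [Set.indicator_apply, hT, hr.2]
    · rw [Set.indicator_of_notMem hr]
      refine integral_eq_zero_of_ae (.of_forall fun z ↦ Set.indicator_of_notMem ?_ _)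
      exact fun h ↦ hr ⟨h.1.trans h.2.1, h.2.2⟩
  calc ∫ z in a..b, ∫ r in z..b, f z r ∂ν ∂μ
      = ∫ z, ∫ r, T.indicator (Function.uncurry f) (z, r) ∂ν ∂μ := by
        simp_rw [integral_first_fixed, integral_indicator measurableSet_Ioc,
          intervalIntegral.integral_of_le hab]
    _ = ∫ r, ∫ z, T.indicator (Function.uncurry f) (z, r) ∂μ ∂ν :=
        integral_integral_swap (hf.integrable_indicator measurableSet_T)
    _ = ∫ r in a..b, ∫ z in a..r, f z r ∂μ ∂ν := by
        simp_rw [integral_second_fixed, integral_indicator measurableSet_Ioc,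
          intervalIntegral.integral_of_le hab]

theorem intervalIntegral_comp_div_self (g : ℝ → E) (r : ℝ) :
    ∫ z in 0..r, g (z / r) = r • ∫ t in 0..1, g t := by
  rcases eq_or_ne r 0 with rfl | hr
  · simp
  · rw [intervalIntegral.integral_comp_div g hr, zero_div, div_self hr]

theorem integrableOn_triangle_pow_smul_comp_div {g : ℝ → E} (hg : ContinuousOn g (Set.Icc 0 1))
    (n : ℕ) (δ : ℝ) :
    IntegrableOn (fun p : ℝ × ℝ ↦ p.2 ^ n • g (p.1 / p.2))
      {p | 0 < p.1 ∧ p.1 < p.2 ∧ p.2 ≤ δ} := by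
  set T : Set (ℝ × ℝ) := {p | 0 < p.1 ∧ p.1 < p.2 ∧ p.2 ≤ δ}
  have measurableSet_T : MeasurableSet T := by measurability
  have pos_snd : ∀ p ∈ T, 0 < p.2 := fun p hp ↦ hp.1.trans hp.2.1
  have volume_T_lt_top : volume T < ⊤ := by
    refine (measure_mono fun p hp ↦ ?_).trans_lt
      (isCompact_Icc (a := ((0, 0) : ℝ × ℝ)) (b := (δ, δ))).measure_lt_top
    exact ⟨⟨hp.1.le, (pos_snd p hp).le⟩, hp.2.1.le.trans hp.2.2, hp.2.2⟩
  have mapsTo_div : Set.MapsTo (fun p : ℝ × ℝ ↦ p.1 / p.2) T (Set.Icc 0 1) := fun p hp ↦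
    ⟨div_nonneg hp.1.le (pos_snd p hp).le, div_le_one_of_le₀ hp.2.1.le (pos_snd p hp).le⟩
  have continuousOn_div : ContinuousOn (fun p : ℝ × ℝ ↦ p.1 / p.2) T :=
    continuousOn_fst.div continuousOn_snd fun p hp ↦ (pos_snd p hp).ne'
  have continuousOn_T : ContinuousOn (fun p : ℝ × ℝ ↦ p.2 ^ n • g (p.1 / p.2)) T :=
    (continuousOn_snd.pow n).smul (hg.comp continuousOn_div mapsTo_div)
  obtain ⟨C, hC⟩ := isCompact_Icc.exists_bound_of_continuousOn hg
  refine .of_bound volume_T_lt_top (continuousOn_T.aestronglyMeasurable measurableSet_T)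
    (δ ^ n * C) (ae_restrict_of_forall_mem measurableSet_T fun p hp ↦ ?_)
  have hp0 := (pos_snd p hp).le
  rw [norm_smul, norm_pow, Real.norm_of_nonneg hp0]
  exact mul_le_mul (pow_le_pow_left₀ hp0 hp.2.2 n) (hC _ (mapsTo_div hp)) (norm_nonneg _)
    (pow_nonneg (hp0.trans hp.2.2) n)

theorem integral_triangle_pow_smul_comp_div [CompleteSpace E] {g : ℝ → E}
    (hg : ContinuousOn g (Set.Icc 0 1)) (n : ℕ) {δ : ℝ} (hδ : 0 ≤ δ) :
    ∫ z in 0..δ, ∫ r in z..δ, r ^ n • g (z / r) =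
      (δ ^ (n + 2) / (n + 2)) • ∫ t in 0..1, g t := by
  calc ∫ z in 0..δ, ∫ r in z..δ, r ^ n • g (z / r)
      = ∫ r in 0..δ, ∫ z in 0..r, r ^ n • g (z / r) :=
        intervalIntegral_integral_swap_triangle hδ (integrableOn_triangle_pow_smul_comp_div hg n δ)
    _ = ∫ r in 0..δ, r ^ (n + 1) • ∫ t in 0..1, g t := by
        simp_rw [intervalIntegral.integral_smul, intervalIntegral_comp_div_self, smul_smul,
          ← pow_succ]
    _ = (δ ^ (n + 2) / (n + 2)) • ∫ t in 0..1, g t := by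
        rw [intervalIntegral.integral_smul_const, integral_pow]
        congr 1
        push_cast
        ring

end

theorem hasDerivAt_mul_arccos_sub_sqrt {x : ℝ} (hx₁ : x ≠ -1) (hx₂ : x ≠ 1) :
    HasDerivAt (fun x ↦ x * arccos x - √(1 - x ^ 2)) (arccos x) x := by
  have one_sub_sq_ne_zero : 1 - x ^ 2 ≠ 0 := by
    rw [sub_ne_zero, ne_comm, sq_ne_one_iff]
    exact ⟨hx₂, hx₁⟩
  have deriv_one_sub_sq : HasDerivAt (fun x : ℝ ↦ 1 - x ^ 2) (-(2 * x)) x := by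
    simpa using (hasDerivAt_pow 2 x).const_sub 1
  refine (((hasDerivAt_id' x).fun_mul (hasDerivAt_arccos hx₁ hx₂)).fun_sub
    (deriv_one_sub_sq.sqrt one_sub_sq_ne_zero)).congr_deriv ?_
  -- For `1 < |x|` the terms in `1 / √(1 - x ^ 2)` are `0` by the conventions for `√` and `/`.
  ring

theorem integral_arccos (a b : ℝ) :
    ∫ x in a..b, arccos x =
      (b * arccos b - √(1 - b ^ 2)) - (a * arccos a - √(1 - a ^ 2)) := by
  refine integral_eq_of_hasDerivAt_off_countable (s := {-1, 1})
    (fun x ↦ x * arccos x - √(1 - x ^ 2)) arccos (Set.toFinite _).countable ?_ ?_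
    (continuous_arccos.intervalIntegrable a b)
  · exact Continuous.continuousOn (by fun_prop)
  · rintro x ⟨-, hx⟩
    rw [Set.mem_insert_iff, Set.mem_singleton_iff, not_or] at hx
    exact hasDerivAt_mul_arccos_sub_sqrt hx.1 hx.2

theorem integral_arccos_zero_one : ∫ t in (0 : ℝ)..1, arccos t = 1 := by
  simp [integral_arccos]

theorem integral_triangle_integral_arccos_const_mul (w : ℝ) {δ : ℝ} (hδ : 0 ≤ δ) :
    ∫ z in 0..δ, ∫ r in z..δ, ∫ _θ in (-arccos (z / r))..arccos (z / r), w * r =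
      2 * w * δ ^ 3 / 3 := by
  have integral_angle (z r : ℝ) :
      ∫ _θ in (-arccos (z / r))..arccos (z / r), w * r = 2 * w * (r ^ 1 • arccos (z / r)) := by
    rw [intervalIntegral.integral_const, smul_eq_mul, smul_eq_mul]
    ring
  simp_rw [integral_angle, intervalIntegral.integral_const_mul]
  rw [integral_triangle_pow_smul_comp_div continuous_arccos.continuousOn 1 hδ,
    integral_arccos_zero_one, smul_eq_mul]
  push_cast
  ring

/-- 2D energy release rate under the critical energy density criterion: the
iterated integral `h·∫₀^δ ∫_z^δ ∫_{-arccos(z/r)}^{arccos(z/r)} w_c·r dθ dr dz`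
equals `2·h·w_c·δ³/3`; consequently, if this equals `G₀ > 0`, then
`w_c = 3·G₀/(2·h·δ³)`. -/
theorem energy_release_rate_critical_energy_density_2D
    (δ h wc : ℝ) (hδ : 0 < δ) (hh : 0 < h) (hwc : 0 < wc) :
    h * (∫ z in (0:ℝ)..δ, ∫ r in z..δ,
        ∫ θ in (-(Real.arccos (z / r)))..(Real.arccos (z / r)), wc * r)
      = 2 * h * wc * δ ^ 3 / 3 ∧
    ∀ G₀ : ℝ, 0 < G₀ →
      h * (∫ z in (0:ℝ)..δ, ∫ r in z..δ,
          ∫ θ in (-(Real.arccos (z / r)))..(Real.arccos (z / r)), wc * r) = G₀ →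
      wc = 3 * G₀ / (2 * h * δ ^ 3) := by
  rw [integral_triangle_integral_arccos_const_mul wc hδ.le]
  refine ⟨by ring, fun G₀ _ hG => ?_⟩
  rw [← hG]
  field_simp
end

section
/- (Nonequivalence of bond-failure criteria for 2D problems.) Let δ > 0, G₀ > 0, h > 0, c > 0, and let ω : ℝ → ℝ satisfy ω(r) > 0 for r ∈ (0, δ], with I₃ := ∫₀^δ ω(r)·r³ dr finite and positive. Define s₀² = G₀/(h·c·I₃) and s_c²(ρ) = 3·G₀/(h·c·δ³·ω(ρ)·ρ). Then s_c²(ρ) = s₀² for all ρ ∈ (0, δ] if and only if there exists a constant β > 0 such that ω(ρ) = β/ρ for all ρ ∈ (0, δ]. Moreover, in that case, if additionally c = 16E/(5πh·∫₀^δ ω(r)r² dr) (plane strain) then s₀² = s_c²(ρ) = 15π·G₀/(32·E·δ), while if c = 3E/(πh·∫₀^δ ω(r)r² dr) (plane stress) then s₀² = s_c²(ρ) = π·G₀/(2·E·δ). -/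
open Real MeasureTheory

/-!
Both squared stretches carry the factor `G₀ / (h c)`, so they agree at `ρ` exactly when
`ω ρ * ρ = 3 I₃ / δ³`, a constant. Conversely, if `ω ρ = β / ρ` then `I₃ = β δ³ / 3`, so this
constant is `β` itself and the condition is self-consistent. In that case `I₃ / I₂ = 2 δ / 3`,
hence a micromodulus `c = k E / (h I₂)` gives `h c I₃ = 2 k E δ / 3`, whatever `β` is.
-/

/-- The moment `∫₀^δ ω(r) rⁿ dr` of the influence function `ω` over the horizon `δ`. The
micromodulus is normalised by the moment of order two, the critical stretch by that of order
three. -/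
noncomputable def influenceMoment (ω : ℝ → ℝ) (δ : ℝ) (n : ℕ) : ℝ :=
  ∫ r in (0 : ℝ)..δ, ω r * r ^ n

/-- The square `s₀²` of the critical stretch matching the energy release rate `G₀`. -/
noncomputable def criticalStretchSq (G₀ h c δ : ℝ) (ω : ℝ → ℝ) : ℝ :=
  G₀ / (h * c * influenceMoment ω δ 3)

/-- The square `s_c²(ρ)` of the stretch at which a bond of length `ρ` fails under the critical
energy density criterion. -/
noncomputable def energyDensityStretchSq (G₀ h c δ : ℝ) (ω : ℝ → ℝ) (ρ : ℝ) : ℝ :=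
  3 * G₀ / (h * c * δ ^ 3 * ω ρ * ρ)

section BondFailure

variable {G₀ h c δ β : ℝ} {ω : ℝ → ℝ}

theorem influenceMoment_succ_of_eq_div (hδ : 0 ≤ δ)
    (hωβ : ∀ r ∈ Set.Ioc 0 δ, ω r = β / r) (n : ℕ) :
    influenceMoment ω δ (n + 1) = β * δ ^ (n + 1) / (n + 1) := by
  have integrand_eq : ∀ r ∈ Set.uIoc 0 δ, ω r * r ^ (n + 1) = β * r ^ n := by
    intro r hr
    rw [Set.uIoc_of_le hδ] at hr
    have hr₀ : r ≠ 0 := hr.1.ne'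
    rw [hωβ r hr, pow_succ']
    field_simp
  calc influenceMoment ω δ (n + 1)
      = ∫ r in (0 : ℝ)..δ, β * r ^ n :=
        intervalIntegral.integral_congr_ae (.of_forall integrand_eq)
    _ = β * δ ^ (n + 1) / (n + 1) := by
        rw [intervalIntegral.integral_const_mul, integral_pow, zero_pow n.succ_ne_zero, sub_zero,
          mul_div_assoc]

theorem energyDensityStretchSq_eq_criticalStretchSq_iff {ρ : ℝ} (hG₀ : G₀ ≠ 0) (hh : h ≠ 0)
    (hc : c ≠ 0) (hδ : δ ≠ 0) (hI₃ : influenceMoment ω δ 3 ≠ 0) (hω : ω ρ ≠ 0) (hρ : ρ ≠ 0) :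
    energyDensityStretchSq G₀ h c δ ω ρ = criticalStretchSq G₀ h c δ ω ↔
      ω ρ = 3 * influenceMoment ω δ 3 / δ ^ 3 / ρ := by
  unfold energyDensityStretchSq criticalStretchSq
  field_simp
  exact eq_comm

theorem forall_eq_influenceMoment_div_iff_exists (hδ : 0 < δ) (hI₃ : 0 < influenceMoment ω δ 3) :
    (∀ ρ ∈ Set.Ioc 0 δ, ω ρ = 3 * influenceMoment ω δ 3 / δ ^ 3 / ρ) ↔
      ∃ β : ℝ, 0 < β ∧ ∀ ρ ∈ Set.Ioc 0 δ, ω ρ = β / ρ := by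
  refine ⟨fun hω => ⟨_, by positivity, hω⟩, ?_⟩
  rintro ⟨β, -, hωβ⟩
  have moment_eq : 3 * influenceMoment ω δ 3 / δ ^ 3 = β := by
    rw [influenceMoment_succ_of_eq_div hδ.le hωβ 2]
    push_cast
    field_simp
    ring
  rwa [moment_eq]

theorem forall_energyDensityStretchSq_eq_criticalStretchSq_iff (hG₀ : G₀ ≠ 0) (hh : h ≠ 0)
    (hc : c ≠ 0) (hδ : 0 < δ) (hI₃ : 0 < influenceMoment ω δ 3)
    (hω : ∀ ρ ∈ Set.Ioc 0 δ, ω ρ ≠ 0) :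
    (∀ ρ ∈ Set.Ioc 0 δ, energyDensityStretchSq G₀ h c δ ω ρ = criticalStretchSq G₀ h c δ ω) ↔
      ∃ β : ℝ, 0 < β ∧ ∀ ρ ∈ Set.Ioc 0 δ, ω ρ = β / ρ := by
  rw [← forall_eq_influenceMoment_div_iff_exists hδ hI₃]
  exact forall₂_congr fun ρ hρ => energyDensityStretchSq_eq_criticalStretchSq_iff
    hG₀ hh hc hδ.ne' hI₃.ne' (hω ρ hρ) hρ.1.ne'

theorem influenceMoment_three_eq_of_eq_div (hδ : 0 ≤ δ)
    (hωβ : ∀ r ∈ Set.Ioc 0 δ, ω r = β / r) :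
    influenceMoment ω δ 3 = 2 * δ / 3 * influenceMoment ω δ 2 := by
  rw [influenceMoment_succ_of_eq_div hδ hωβ 2, influenceMoment_succ_of_eq_div hδ hωβ 1]
  push_cast
  ring

theorem criticalStretchSq_of_eq_div {k E : ℝ} (hδ : 0 ≤ δ) (hh : h ≠ 0)
    (hI₂ : influenceMoment ω δ 2 ≠ 0) (hωβ : ∀ r ∈ Set.Ioc 0 δ, ω r = β / r)
    (hc : c = k * E / (h * influenceMoment ω δ 2)) :
    criticalStretchSq G₀ h c δ ω = G₀ / (2 / 3 * k * E * δ) := by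
  have stiffness_eq : h * c * influenceMoment ω δ 3 = 2 / 3 * k * E * δ := by
    rw [hc, influenceMoment_three_eq_of_eq_div hδ hωβ]
    field_simp
  rw [criticalStretchSq, stiffness_eq]

theorem criticalStretchSq_planeStrain_of_eq_div {E : ℝ} (hδ : 0 ≤ δ) (hh : h ≠ 0)
    (hI₂ : influenceMoment ω δ 2 ≠ 0) (hωβ : ∀ r ∈ Set.Ioc 0 δ, ω r = β / r)
    (hc : c = 16 * E / (5 * π * h * influenceMoment ω δ 2)) :
    criticalStretchSq G₀ h c δ ω = 15 * π * G₀ / (32 * E * δ) := by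
  have hck : c = 16 / (5 * π) * E / (h * influenceMoment ω δ 2) := by
    rw [hc]
    field_simp
  rw [criticalStretchSq_of_eq_div hδ hh hI₂ hωβ hck]
  field_simp
  ring

theorem criticalStretchSq_planeStress_of_eq_div {E : ℝ} (hδ : 0 ≤ δ) (hh : h ≠ 0)
    (hI₂ : influenceMoment ω δ 2 ≠ 0) (hωβ : ∀ r ∈ Set.Ioc 0 δ, ω r = β / r)
    (hc : c = 3 * E / (π * h * influenceMoment ω δ 2)) :
    criticalStretchSq G₀ h c δ ω = π * G₀ / (2 * E * δ) := by
  have hck : c = 3 / π * E / (h * influenceMoment ω δ 2) := by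
    rw [hc]
    field_simp
  rw [criticalStretchSq_of_eq_div hδ hh hI₂ hωβ hck]
  field_simp

end BondFailure

/-- Nonequivalence of bond-failure criteria for 2D problems: `s_c²(ρ) = s₀²` for
all `ρ ∈ (0, δ]` iff there is `β > 0` with `ω(ρ) = β/ρ` on `(0, δ]`; and in that
case, for the plane strain micromodulus `c = 16E/(5πh·I₂)` one has
`s₀² = s_c²(ρ) = 15π·G₀/(32·E·δ)`, while for the plane stress micromodulus
`c = 3E/(πh·I₂)` one has `s₀² = s_c²(ρ) = π·G₀/(2·E·δ)`. -/
theorem nonequivalence_bond_failure_criteria_2D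
    (δ G₀ h c E : ℝ) (hδ : 0 < δ) (hG₀ : 0 < G₀) (hh : 0 < h) (hc : 0 < c)
    (ω : ℝ → ℝ) (hω : ∀ r ∈ Set.Ioc (0:ℝ) δ, 0 < ω r)
    (I₂ I₃ : ℝ)
    (hI₂ : I₂ = ∫ r in (0:ℝ)..δ, ω r * r ^ 2) (hI₂pos : 0 < I₂)
    (hI₃ : I₃ = ∫ r in (0:ℝ)..δ, ω r * r ^ 3) (hI₃pos : 0 < I₃)
    (s0sq : ℝ) (hs0sq : s0sq = G₀ / (h * c * I₃))
    (scsq : ℝ → ℝ)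
    (hscsq : ∀ ρ ∈ Set.Ioc (0:ℝ) δ,
      scsq ρ = 3 * G₀ / (h * c * δ ^ 3 * ω ρ * ρ)) :
    ((∀ ρ ∈ Set.Ioc (0:ℝ) δ, scsq ρ = s0sq) ↔
      ∃ β : ℝ, 0 < β ∧ ∀ ρ ∈ Set.Ioc (0:ℝ) δ, ω ρ = β / ρ) ∧
    ((∃ β : ℝ, 0 < β ∧ ∀ ρ ∈ Set.Ioc (0:ℝ) δ, ω ρ = β / ρ) →
      (c = 16 * E / (5 * π * h * I₂) →
        s0sq = 15 * π * G₀ / (32 * E * δ) ∧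
        ∀ ρ ∈ Set.Ioc (0:ℝ) δ, scsq ρ = 15 * π * G₀ / (32 * E * δ)) ∧
      (c = 3 * E / (π * h * I₂) →
        s0sq = π * G₀ / (2 * E * δ) ∧
        ∀ ρ ∈ Set.Ioc (0:ℝ) δ, scsq ρ = π * G₀ / (2 * E * δ))) := by
  change I₂ = influenceMoment ω δ 2 at hI₂
  change I₃ = influenceMoment ω δ 3 at hI₃
  subst hI₂ hI₃
  change s0sq = criticalStretchSq G₀ h c δ ω at hs0sq
  change ∀ ρ ∈ Set.Ioc 0 δ, scsq ρ = energyDensityStretchSq G₀ h c δ ω ρ at hscsq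
  subst hs0sq
  have criteria_iff : (∀ ρ ∈ Set.Ioc 0 δ, scsq ρ = criticalStretchSq G₀ h c δ ω) ↔
      ∃ β : ℝ, 0 < β ∧ ∀ ρ ∈ Set.Ioc 0 δ, ω ρ = β / ρ := by
    rw [← forall_energyDensityStretchSq_eq_criticalStretchSq_iff hG₀.ne' hh.ne' hc.ne' hδ hI₃pos
      fun ρ hρ => (hω ρ hρ).ne']
    exact forall₂_congr fun ρ hρ => by rw [hscsq ρ hρ]
  refine ⟨criteria_iff, fun hinv => ?_⟩
  have scsq_eq := criteria_iff.2 hinv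
  obtain ⟨β, -, hωβ⟩ := hinv
  refine ⟨fun hstrain => ?_, fun hstress => ?_⟩
  · have hs₀ := criticalStretchSq_planeStrain_of_eq_div (G₀ := G₀)
      hδ.le hh.ne' hI₂pos.ne' hωβ hstrain
    exact ⟨hs₀, fun ρ hρ => (scsq_eq ρ hρ).trans hs₀⟩
  · have hs₀ := criticalStretchSq_planeStress_of_eq_div (G₀ := G₀)
      hδ.le hh.ne' hI₂pos.ne' hωβ hstress
    exact ⟨hs₀, fun ρ hρ => (scsq_eq ρ hρ).trans hs₀⟩
end
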